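/- Soundness and completeness of H_KT with respect to the RNmatrix RM_KT: for every set of formulas Γ and every formula A, Γ ⊢_{H_KT} A if and only if every valuation v ∈ F_KT that designates all formulas of Γ also designates A. -/

import Mathlib

/-- Formulas of the modal language: propositional variables, negation,
the modality ⊖ (here `box`), and implication. -/
inductive Form : Type
  | var : ℕ → Form
  | neg : Form → Form
  | box : Form → Form
  | imp : Form → Form → Form

/-- A valuation `v = (v1, v2)` over the 4-valued Nmatrix for the minimal modal
logic M: `v1` behaves classically on ¬ and →, and `v1(⊖A) = v2(A)`;
`v2` is otherwise unconstrained. -/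
structure Val where
  v1 : Form → Fin 2
  v2 : Form → Fin 2
  neg_eq : ∀ A, v1 (Form.neg A) = 1 - v1 A
  imp_eq : ∀ A B, v1 (Form.imp A B) = max (1 - v1 A) (v1 B)
  box_eq : ∀ A, v1 (Form.box A) = v2 A

/-- The restriction defining F_K: valuations satisfying the (K) condition. -/
def FK (v : Val) : Prop :=
  ∀ A B : Form, v.v2 (A.imp B) ≤ max (1 - v.v2 A) (v.v2 B)

/-- The restriction defining F_KT. -/
def FKT (v : Val) : Prop :=
  FK v ∧ ∀ A : Form, v.v2 A ≤ v.v1 A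

/-- The Hilbert calculus H_KT: H plus axiom schemas (K) and (T). -/
inductive HKT : Set Form → Form → Prop
  | hyp {Γ A} : A ∈ Γ → HKT Γ A
  | ax1 {Γ} (A B : Form) : HKT Γ (A.imp (B.imp A))
  | ax2 {Γ} (A B C : Form) :
      HKT Γ ((A.imp (B.imp C)).imp ((A.imp B).imp (A.imp C)))
  | ax3 {Γ} (A B : Form) : HKT Γ ((B.neg.imp A.neg).imp (A.imp B))
  | axK {Γ} (A B : Form) :
      HKT Γ ((Form.box (A.imp B)).imp ((Form.box A).imp (Form.box B)))
  | axT {Γ} (A : Form) : HKT Γ ((Form.box A).imp A)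
  | mp {Γ A B} : HKT Γ (A.imp B) → HKT Γ A → HKT Γ B

/-!
A valuation satisfies the restrictions defining `FKT` exactly when it designates every instance of
the schemas (K) and (T), so soundness is an induction on derivations. For completeness, a set not
deriving `A` extends by Zorn's lemma to a maximal such set `Δ`. Since `v2` is unconstrained apart
from `v1 (⊖B) = v2 B`, it can be read off from which boxed formulas lie in `Δ`: a single maximal
set already yields a valuation, and no accessibility relation between such sets is needed.
-/

namespace HKT

variable {Γ Δ : Set Form} {A B : Form}

theorem mono (hΓΔ : Γ ⊆ Δ) (h : HKT Γ A) : HKT Δ A := by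
  induction h with
  | hyp hA => exact .hyp (hΓΔ hA)
  | ax1 A B => exact .ax1 A B
  | ax2 A B C => exact .ax2 A B C
  | ax3 A B => exact .ax3 A B
  | axK A B => exact .axK A B
  | axT A => exact .axT A
  | mp _ _ ihAB ihA => exact .mp ihAB ihA

theorem weakening (h : HKT Γ A) : HKT (insert B Γ) A :=
  h.mono (Set.subset_insert B Γ)

theorem insert_self : HKT (insert A Γ) A :=
  .hyp (Set.mem_insert A Γ)

theorem exists_finite_subset (h : HKT Γ A) : ∃ Δ ⊆ Γ, Δ.Finite ∧ HKT Δ A := by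
  induction h with
  | hyp hA => exact ⟨{_}, Set.singleton_subset_iff.2 hA, Set.finite_singleton _, .hyp rfl⟩
  | ax1 A B => exact ⟨∅, Set.empty_subset _, Set.finite_empty, .ax1 A B⟩
  | ax2 A B C => exact ⟨∅, Set.empty_subset _, Set.finite_empty, .ax2 A B C⟩
  | ax3 A B => exact ⟨∅, Set.empty_subset _, Set.finite_empty, .ax3 A B⟩
  | axK A B => exact ⟨∅, Set.empty_subset _, Set.finite_empty, .axK A B⟩
  | axT A => exact ⟨∅, Set.empty_subset _, Set.finite_empty, .axT A⟩
  | mp _ _ ihAB ihA =>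
    obtain ⟨Δ₁, hΔ₁, hfin₁, hAB⟩ := ihAB
    obtain ⟨Δ₂, hΔ₂, hfin₂, hA⟩ := ihA
    exact ⟨Δ₁ ∪ Δ₂, Set.union_subset hΔ₁ hΔ₂, hfin₁.union hfin₂,
      .mp (hAB.mono Set.subset_union_left) (hA.mono Set.subset_union_right)⟩

theorem exists_mem_of_sUnion {c : Set (Set Form)} (hc : DirectedOn (· ⊆ ·) c) (hne : c.Nonempty)
    (h : HKT (⋃₀ c) A) : ∃ Δ ∈ c, HKT Δ A := by
  obtain ⟨Φ, hΦ, hfin, hA⟩ := h.exists_finite_subset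
  obtain ⟨Δ, hΔ, hΦΔ⟩ := hc.exists_mem_subset_of_finite_of_subset_sUnion hne hfin hΦ
  exact ⟨Δ, hΔ, hA.mono hΦΔ⟩

theorem imp_self (A : Form) : HKT Γ (A.imp A) :=
  .mp (.mp (.ax2 A (A.imp A) A) (.ax1 A (A.imp A))) (.ax1 A A)

theorem imp_of_right (h : HKT Γ B) : HKT Γ (A.imp B) :=
  .mp (.ax1 B A) h

theorem imp_of_neg_left (h : HKT Γ A.neg) : HKT Γ (A.imp B) :=
  .mp (.ax3 A B) h.imp_of_right

theorem deduction (h : HKT (insert A Γ) B) : HKT Γ (A.imp B) := by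
  generalize hΔ : insert A Γ = Δ at h
  induction h with
  | hyp hB =>
    subst hΔ
    rcases hB with rfl | hB
    · exact imp_self _
    · exact imp_of_right (.hyp hB)
  | ax1 A B => exact imp_of_right (.ax1 A B)
  | ax2 A B C => exact imp_of_right (.ax2 A B C)
  | ax3 A B => exact imp_of_right (.ax3 A B)
  | axK A B => exact imp_of_right (.axK A B)
  | axT A => exact imp_of_right (.axT A)
  | mp _ _ ihBC ihB => exact .mp (.mp (.ax2 _ _ _) ihBC) ihB

theorem by_contradiction (hneg : HKT (insert A.neg Γ) B.neg) (h : HKT (insert A.neg Γ) B) :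
    HKT Γ A :=
  have habsurd : HKT Γ (A.neg.imp (A.imp A).neg) := deduction (.mp hneg.imp_of_neg_left h)
  .mp (.mp (.ax3 (A.imp A) A) habsurd) (imp_self A)

theorem of_neg_neg (h : HKT Γ A.neg.neg) : HKT Γ A :=
  by_contradiction h.weakening insert_self

theorem neg_of_insert (hneg : HKT (insert A Γ) B.neg) (h : HKT (insert A Γ) B) : HKT Γ A.neg :=
  have of_neg_neg_insert {C : Form} (hC : HKT (insert A Γ) C) : HKT (insert A.neg.neg Γ) C :=
    .mp hC.deduction.weakening insert_self.of_neg_neg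
  by_contradiction (of_neg_neg_insert hneg) (of_neg_neg_insert h)

theorem of_insert_of_insert_neg (hpos : HKT (insert B Γ) A) (hneg : HKT (insert B.neg Γ) A) :
    HKT Γ A :=
  have hnegB : HKT (insert A.neg Γ) B.neg :=
    neg_of_insert insert_self.weakening
      (hpos.mono (Set.insert_subset_insert (Set.subset_insert _ _)))
  by_contradiction insert_self (.mp hneg.deduction.weakening hnegB)

end HKT

namespace Val

variable (v : Val) (A B : Form)

theorem v1_neg_eq_one_iff : v.v1 A.neg = 1 ↔ v.v1 A ≠ 1 := by
  rw [v.neg_eq]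
  generalize v.v1 A = a
  decide +revert

theorem v1_imp_eq_one_iff : v.v1 (A.imp B) = 1 ↔ (v.v1 A = 1 → v.v1 B = 1) := by
  rw [v.imp_eq]
  generalize v.v1 A = a, v.v1 B = b
  decide +revert

end Val

theorem fk_iff_forall_axK {v : Val} :
    FK v ↔ ∀ A B : Form, v.v1 ((A.imp B).box.imp (A.box.imp B.box)) = 1 := by
  have le_max_iff (a b c : Fin 2) : c ≤ max (1 - a) b ↔ (c = 1 → a = 1 → b = 1) := by
    decide +revert
  simp only [FK, le_max_iff, Val.v1_imp_eq_one_iff, Val.box_eq]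

theorem fkt_iff_forall_axK_and_forall_axT {v : Val} :
    FKT v ↔ (∀ A B : Form, v.v1 ((A.imp B).box.imp (A.box.imp B.box)) = 1) ∧
      ∀ A : Form, v.v1 (A.box.imp A) = 1 := by
  have le_iff (a b : Fin 2) : a ≤ b ↔ (a = 1 → b = 1) := by
    decide +revert
  simp only [FKT, fk_iff_forall_axK, le_iff, Val.v1_imp_eq_one_iff, Val.box_eq]

theorem HKT.sound {Γ : Set Form} {A : Form} (h : HKT Γ A) {v : Val} (hv : FKT v)
    (hΓ : ∀ B ∈ Γ, v.v1 B = 1) : v.v1 A = 1 := by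
  obtain ⟨hK, hT⟩ := fkt_iff_forall_axK_and_forall_axT.1 hv
  induction h with
  | hyp hA => exact hΓ _ hA
  | ax1 A B => simp only [v.v1_imp_eq_one_iff]; tauto
  | ax2 A B C => simp only [v.v1_imp_eq_one_iff]; tauto
  | ax3 A B => simp only [v.v1_imp_eq_one_iff, v.v1_neg_eq_one_iff]; tauto
  | axK A B => exact hK A B
  | axT A => exact hT A
  | mp _ _ ihAB ihA => exact (v.v1_imp_eq_one_iff _ _).1 ihAB ihA

/-- Truth sets in Smullyan's sense: sets of formulas that respect the classical truth conditions
of negation and implication, boxed formulas being treated as atoms. They are the sets of formulas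
designated by some valuation. -/
structure IsTruthSet (Δ : Set Form) : Prop where
  neg_mem_iff (A : Form) : A.neg ∈ Δ ↔ A ∉ Δ
  imp_mem_iff (A B : Form) : A.imp B ∈ Δ ↔ (A ∈ Δ → B ∈ Δ)

namespace IsTruthSet

variable {Δ : Set Form}

open Classical in
/-- The valuation designating exactly the members of a truth set `Δ`; its second component at `A`
records whether `⊖A` belongs to `Δ`. -/
noncomputable def toVal (hΔ : IsTruthSet Δ) : Val where
  v1 A := if A ∈ Δ then 1 else 0
  v2 A := if A.box ∈ Δ then 1 else 0
  neg_eq A := by by_cases hA : A ∈ Δ <;> simp [hΔ.neg_mem_iff, hA]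
  imp_eq A B := by
    by_cases hA : A ∈ Δ <;> by_cases hB : B ∈ Δ <;> simp [hΔ.imp_mem_iff, hA, hB]
  box_eq _ := rfl

theorem toVal_v1_eq_one_iff (hΔ : IsTruthSet Δ) (A : Form) : hΔ.toVal.v1 A = 1 ↔ A ∈ Δ := by
  simp [toVal]

end IsTruthSet

/-- `Δ` is saturated relative to `A`: it does not derive `A`, but each of its proper supersets
does. Such sets play the role of maximal consistent sets in the completeness proof. -/
def IsSaturated (A : Form) (Δ : Set Form) : Prop :=
  Maximal (fun Φ => ¬ HKT Φ A) Δ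

theorem exists_isSaturated_superset {Γ : Set Form} {A : Form} (hA : ¬ HKT Γ A) :
    ∃ Δ, Γ ⊆ Δ ∧ IsSaturated A Δ := by
  refine zorn_subset_nonempty {Φ | ¬ HKT Φ A} (fun c hc hchain hne => ?_) Γ hA
  refine ⟨⋃₀ c, fun hUnion => ?_, fun Φ hΦ => Set.subset_sUnion_of_mem hΦ⟩
  obtain ⟨Φ, hΦ, hΦA⟩ := hUnion.exists_mem_of_sUnion hchain.directedOn hne
  exact hc hΦ hΦA

namespace IsSaturated

variable {A B : Form} {Δ : Set Form}

theorem not_derives (hΔ : IsSaturated A Δ) : ¬ HKT Δ A :=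
  hΔ.prop

theorem insert_derives (hΔ : IsSaturated A Δ) (hB : B ∉ Δ) : HKT (insert B Δ) A := by
  by_contra hA
  exact hB (hΔ.le_of_ge hA (Set.subset_insert B Δ) (Set.mem_insert B Δ))

theorem mem_of_derives (hΔ : IsSaturated A Δ) (h : HKT Δ B) : B ∈ Δ := by
  by_contra hB
  exact hΔ.not_derives (.mp (hΔ.insert_derives hB).deduction h)

theorem isTruthSet (hΔ : IsSaturated A Δ) : IsTruthSet Δ := by
  have neg_mem_iff (B : Form) : B.neg ∈ Δ ↔ B ∉ Δ := by
    refine ⟨fun hneg hB => ?_, fun hB => ?_⟩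
    · exact hΔ.not_derives (.mp (HKT.hyp hneg).imp_of_neg_left (.hyp hB))
    · by_contra hneg
      exact hΔ.not_derives <|
        .of_insert_of_insert_neg (hΔ.insert_derives hB) (hΔ.insert_derives hneg)
  refine ⟨neg_mem_iff, fun B C => ⟨fun hBC hB => ?_, fun hBC => hΔ.mem_of_derives ?_⟩⟩
  · exact hΔ.mem_of_derives (.mp (.hyp hBC) (.hyp hB))
  · by_cases hB : B ∈ Δ
    · exact (HKT.hyp (hBC hB)).imp_of_right
    · exact (HKT.hyp ((neg_mem_iff B).2 hB)).imp_of_neg_left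

theorem fkt_toVal (hΔ : IsSaturated A Δ) : FKT hΔ.isTruthSet.toVal := by
  simp only [fkt_iff_forall_axK_and_forall_axT, IsTruthSet.toVal_v1_eq_one_iff]
  exact ⟨fun B C => hΔ.mem_of_derives (.axK B C), fun B => hΔ.mem_of_derives (.axT B)⟩

end IsSaturated

theorem HKT.exists_countermodel {Γ : Set Form} {A : Form} (hA : ¬ HKT Γ A) :
    ∃ v : Val, FKT v ∧ (∀ B ∈ Γ, v.v1 B = 1) ∧ v.v1 A ≠ 1 := by
  obtain ⟨Δ, hΓΔ, hΔ⟩ := exists_isSaturated_superset hA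
  refine ⟨hΔ.isTruthSet.toVal, hΔ.fkt_toVal, fun B hB => ?_, fun hvA => ?_⟩
  · exact (hΔ.isTruthSet.toVal_v1_eq_one_iff B).2 (hΓΔ hB)
  · exact hΔ.not_derives (.hyp ((hΔ.isTruthSet.toVal_v1_eq_one_iff A).1 hvA))

/-- Soundness and completeness of H_KT w.r.t. the RNmatrix RM_KT. -/
theorem soundness_completeness_HKT (Γ : Set Form) (A : Form) :
    HKT Γ A ↔ ∀ v : Val, FKT v → (∀ B ∈ Γ, v.v1 B = 1) → v.v1 A = 1 := by
  refine ⟨fun h v hv hΓ => h.sound hv hΓ, fun h => ?_⟩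
  by_contra hA
  obtain ⟨v, hv, hΓ, hvA⟩ := HKT.exists_countermodel hA
  exact hvA (h v hv hΓ)
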